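/- Let X be a set, f : X → X a map, k a natural number, and U₁, …, U_k subsets of X such that for every i ∈ {1,…,k} and every integer n ≥ 1 the image f^n(U_i) is disjoint from U_i. Then for every point z ∈ X and every integer ℓ ≥ 1 there exists an integer j ≥ 1 such that f^{jℓ}(z) does not lie in U₁ ∪ ⋯ ∪ U_k. -/

import Mathlib

theorem stmt_9
    {X : Type*} (f : X → X) (k : ℕ) (U : Fin k → Set X)
    (hU : ∀ i : Fin k, ∀ n : ℕ, 1 ≤ n → Disjoint (f^[n] '' U i) (U i)) :
    ∀ z : X, ∀ ℓ : ℕ, 1 ≤ ℓ → ∃ j : ℕ, 1 ≤ j ∧ f^[j * ℓ] z ∉ ⋃ i, U i := by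
  intro z ℓ hℓ
  by_contra hcon
  have h : ∀ j : ℕ, ∃ i, f^[(j + 1) * ℓ] z ∈ U i := by
    intro j
    by_contra hj
    exact hcon ⟨j + 1, Nat.le_add_left 1 j, fun hm => hj (Set.mem_iUnion.mp hm)⟩
  choose g hg using h
  have key : ∀ a b : ℕ, a < b → g a ≠ g b := by
    intro a b hab heq
    obtain ⟨d, rfl⟩ := Nat.exists_eq_add_of_lt hab
    have h1 : 1 ≤ (d + 1) * ℓ := Nat.mul_pos (Nat.succ_pos d) hℓ
    refine Set.disjoint_left.mp (hU (g a) _ h1) ⟨_, hg a, rfl⟩ ?_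
    have h2 := hg (a + d + 1)
    rw [← heq] at h2
    rw [← Function.iterate_add_apply]
    have h3 : (d + 1) * ℓ + (a + 1) * ℓ = (a + d + 1 + 1) * ℓ := by ring
    rw [h3]
    exact h2
  obtain ⟨a, b, hab, heq⟩ := Finite.exists_ne_map_eq_of_infinite g
  rcases lt_or_gt_of_ne hab with h | h
  · exact key a b h heq
  · exact key b a h heq.symm
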